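/- arXiv:1407.2679 — 7 statements merged into one kernel-verified Lean document; each statement's English description precedes it below -/
import Mathlib

section
/- Let π be an affine function on ℝⁿ, let T ⊆ ℕⁿ, and let f, g be polynomials in ℝ[x₁,…,xₙ] with supports T₁ = Support(f) and T₂ = Support(g). If T ⊆ {y ∈ ℝⁿ : π(y) = 0}, 2T₁ ⊆ {y : π(y) ≥ 0}, and 2T₂ ⊆ {y : π(y) > 0} (where 2S = {2a : a ∈ S}), then Proj(f·g, T) = 0. -/
open MvPolynomial
open scoped Classical

noncomputable section

/-- Embed an exponent vector `a ∈ ℕⁿ` into `ℝⁿ`. -/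
def toR {n : ℕ} (a : Fin n →₀ ℕ) : Fin n → ℝ := fun i => (a i : ℝ)

/-- `p` is a sum of squares of polynomials. -/
def IsSOS {n : ℕ} (p : MvPolynomial (Fin n) ℝ) : Prop :=
  ∃ (s : ℕ) (q : Fin s → MvPolynomial (Fin n) ℝ), p = ∑ i, (q i) ^ 2

/-- `Proj(p,T)` for `T ⊆ ℝⁿ`: delete every term of `p` whose exponent vector is not in `T`. -/
def projR {n : ℕ} (p : MvPolynomial (Fin n) ℝ) (T : Set (Fin n → ℝ)) :
    MvPolynomial (Fin n) ℝ :=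
  ∑ a ∈ p.support, if toR a ∈ T then monomial a (p.coeff a) else 0

/-- `Proj(p,T)` for `T ⊆ ℕⁿ`. -/
def projN {n : ℕ} (p : MvPolynomial (Fin n) ℝ) (T : Set (Fin n →₀ ℕ)) :
    MvPolynomial (Fin n) ℝ :=
  ∑ a ∈ p.support, if a ∈ T then monomial a (p.coeff a) else 0

/-- The Newton polytope of `p`: convex hull of its support in `ℝⁿ`. -/
def newton {n : ℕ} (p : MvPolynomial (Fin n) ℝ) : Set (Fin n → ℝ) :=
  convexHull ℝ (toR '' ↑p.support)

/-- `F` is an (exposed) face of `N`: `F ⊆ N`, and either `F = N` or there is an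
affine function vanishing on `F` and strictly positive on `N \ F`. -/
def IsFace {n : ℕ} (N F : Set (Fin n → ℝ)) : Prop :=
  F ⊆ N ∧ (F = N ∨ ∃ π : (Fin n → ℝ) →ᵃ[ℝ] ℝ,
    (∀ x ∈ F, π x = 0) ∧ ∀ x ∈ N \ F, 0 < π x)

/-- `SOSS(p,G)`: whenever `p` is SOS, it has an SOS decomposition all of whose
summands have support contained in `G`. -/
def SOSS {n : ℕ} (p : MvPolynomial (Fin n) ℝ) (G : Finset (Fin n →₀ ℕ)) : Prop :=
  IsSOS p → ∃ (s : ℕ) (q : Fin s → MvPolynomial (Fin n) ℝ),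
    p = ∑ i, (q i) ^ 2 ∧ ∀ i, (q i).support ⊆ G

/-- `V(p,G)`: elements `a ∈ G` whose double has the unique decomposition `a + a` in `G + G`. -/
def VSet {n : ℕ} (G : Finset (Fin n →₀ ℕ)) : Set (Fin n →₀ ℕ) :=
  {a | a ∈ G ∧ ∀ b ∈ G, ∀ r ∈ G, b + r = a + a → b = a ∧ r = a}

/-- Membership in `Relat(a)` (least fixed point of the recursive definition):
`Relat(a) = {a/2}` if the unique decomposition of `a` in `G + G` is `a/2 + a/2`;
otherwise `Relat(a)` is the union of `Relat(2b) ∪ Relat(2r)` over decompositions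
`a = b + r` with `b ≠ r`, `b, r ∈ G`; and `Relat(a) = ∅` if `a ∉ G + G`. -/
inductive RelatMem {n : ℕ} (G : Finset (Fin n →₀ ℕ)) :
    (Fin n →₀ ℕ) → (Fin n →₀ ℕ) → Prop
  | base (a c : Fin n →₀ ℕ) (hc : c ∈ G) (hcc : c + c = a)
      (huniq : ∀ b ∈ G, ∀ r ∈ G, b + r = a → b = c) : RelatMem G a c
  | stepL (a b r v : Fin n →₀ ℕ) (hb : b ∈ G) (hr : r ∈ G) (hne : b ≠ r)
      (hbr : b + r = a) (hv : RelatMem G (b + b) v) : RelatMem G a v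
  | stepR (a b r v : Fin n →₀ ℕ) (hb : b ∈ G) (hr : r ∈ G) (hne : b ≠ r)
      (hbr : b + r = a) (hv : RelatMem G (r + r) v) : RelatMem G a v

/-- `Relat(a)` as a set. -/
def Relat {n : ℕ} (G : Finset (Fin n →₀ ℕ)) (a : Fin n →₀ ℕ) : Set (Fin n →₀ ℕ) :=
  {v | RelatMem G a v}

/-- `σ(T) = {r ∈ G : Relat(2r) ⊆ T}`. -/
def sigmaSet {n : ℕ} (G : Finset (Fin n →₀ ℕ)) (T : Set (Fin n →₀ ℕ)) :
    Set (Fin n →₀ ℕ) :=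
  {r | r ∈ G ∧ Relat G (r + r) ⊆ T}

/-- `p` is a split polynomial with respect to `T₁, …, T_u ⊆ V(p,G)`. -/
def IsSplit {n : ℕ} (p : MvPolynomial (Fin n) ℝ) (G : Finset (Fin n →₀ ℕ))
    (u : ℕ) (T : Fin u → Set (Fin n →₀ ℕ)) : Prop :=
  SOSS p G ∧ (∀ i, T i ⊆ VSet G) ∧ (∀ i, (T i).Nonempty) ∧
  (∀ i j, i ≠ j → Disjoint (T i) (T j)) ∧
  (∀ i, ∀ a ∈ sigmaSet G (T i), ∀ b ∈ sigmaSet G (T i), Relat G (a + b) ⊆ T i) ∧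
  ∀ a ∈ p.support, ∃! i, Relat G a ⊆ T i

/-- The sub-polynomial `Σ_{a ∈ Support(p), Relat(a) ⊆ T} c_a x^a` of `p`. -/
def projRelat {n : ℕ} (p : MvPolynomial (Fin n) ℝ) (G : Finset (Fin n →₀ ℕ))
    (T : Set (Fin n →₀ ℕ)) : MvPolynomial (Fin n) ℝ :=
  ∑ a ∈ p.support, if Relat G a ⊆ T then monomial a (p.coeff a) else 0

/-- `p` is a convex cover polynomial: some pairwise disjoint faces of `New(p)`
cover `Support(p)`. -/
def IsConvexCover {n : ℕ} (p : MvPolynomial (Fin n) ℝ) : Prop :=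
  ∃ (u : ℕ) (F : Fin u → Set (Fin n → ℝ)),
    (∀ i, IsFace (newton p) (F i)) ∧
    (∀ i j, i ≠ j → Disjoint (F i) (F j)) ∧
    toR '' ↑p.support ⊆ ⋃ i, F i

end

/-! An exponent of `f * g` has the form `a + b` with `a` in the support of `f` and `b` in that of
`g`, and `a + b` is the midpoint of `2a` and `2b`. A concave (in particular, an affine) function
which is nonnegative at `2a` and positive at `2b` is positive at the midpoint, so no exponent of
`f * g` lies in `T`. -/

theorem map_add_pos_of_concaveOn {𝕜 E β : Type*} [Field 𝕜] [LinearOrder 𝕜] [IsStrictOrderedRing 𝕜]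
    [AddCommMonoid E] [Module 𝕜 E] [AddCommMonoid β] [PartialOrder β] [IsOrderedAddMonoid β]
    [Module 𝕜 β] [PosSMulStrictMono 𝕜 β] {s : Set E} {φ : E → β} (hφ : ConcaveOn 𝕜 s φ) {x y : E}
    (hxs : x + x ∈ s) (hys : y + y ∈ s) (hx : 0 ≤ φ (x + x)) (hy : 0 < φ (y + y)) :
    0 < φ (x + y) := by
  have inv_two_pos : (0 : 𝕜) < 2⁻¹ := by positivity
  have inv_two_smul_add_self (z : E) : (2⁻¹ : 𝕜) • (z + z) = z := by
    rw [← two_smul 𝕜 z, inv_smul_smul₀ two_ne_zero]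
  calc
    0 < (2⁻¹ : 𝕜) • φ (x + x) + (2⁻¹ : 𝕜) • φ (y + y) :=
      (smul_pos inv_two_pos hy).trans_le (le_add_of_nonneg_left (smul_nonneg inv_two_pos.le hx))
    _ ≤ φ ((2⁻¹ : 𝕜) • (x + x) + (2⁻¹ : 𝕜) • (y + y)) :=
      hφ.2 hxs hys inv_two_pos.le inv_two_pos.le (by norm_num)
    _ = φ (x + y) := by rw [inv_two_smul_add_self, inv_two_smul_add_self]

theorem concaveOn_affineMap {𝕜 E β : Type*} [Ring 𝕜] [PartialOrder 𝕜] [AddCommGroup E]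
    [Module 𝕜 E] [AddCommGroup β] [PartialOrder β] [Module 𝕜 β] (π : E →ᵃ[𝕜] β)
    {s : Set E} (hs : Convex 𝕜 s) : ConcaveOn 𝕜 s π :=
  ⟨hs, fun _ _ _ _ _ _ _ _ hab => (Convex.combo_affine_apply hab).ge⟩

section Exponents

variable {n : ℕ}

theorem toR_add (a b : Fin n →₀ ℕ) : toR (a + b) = toR a + toR b := by
  ext i
  simp [toR]

theorem coeff_projR (p : MvPolynomial (Fin n) ℝ) (T : Set (Fin n → ℝ)) (a : Fin n →₀ ℕ) :
    (projR p T).coeff a = if toR a ∈ T then p.coeff a else 0 := by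
  have coeff_term (b : Fin n →₀ ℕ) :
      (if toR b ∈ T then monomial b (p.coeff b) else 0).coeff a =
        if b = a then if toR a ∈ T then p.coeff a else 0 else 0 := by
    by_cases hba : b = a <;> simp [hba, apply_ite (coeff a)]
  simp +contextual [projR, coeff_sum, coeff_term]

theorem projR_eq_zero_iff {p : MvPolynomial (Fin n) ℝ} {T : Set (Fin n → ℝ)} :
    projR p T = 0 ↔ ∀ a ∈ p.support, toR a ∉ T := by
  simp only [MvPolynomial.ext_iff, coeff_projR, coeff_zero, ite_eq_right_iff, mem_support_iff,
    ne_eq, not_imp_not]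

variable {β : Type*} [AddCommMonoid β] [PartialOrder β] [IsOrderedAddMonoid β] [Module ℝ β]
  [PosSMulStrictMono ℝ β] {φ : (Fin n → ℝ) → β}

theorem pos_of_mem_support_mul {R : Type*} [CommSemiring R] (hφ : ConcaveOn ℝ Set.univ φ)
    {f g : MvPolynomial (Fin n) R}
    (hf : ∀ a ∈ f.support, 0 ≤ φ (toR a + toR a))
    (hg : ∀ b ∈ g.support, 0 < φ (toR b + toR b))
    {c : Fin n →₀ ℕ} (hc : c ∈ (f * g).support) : 0 < φ (toR c) := by
  obtain ⟨a, ha, b, hb, rfl⟩ := Finset.mem_add.mp (support_mul f g hc)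
  rw [toR_add]
  exact map_add_pos_of_concaveOn hφ (Set.mem_univ _) (Set.mem_univ _) (hf a ha) (hg b hb)

theorem statement0_general (hφ : ConcaveOn ℝ Set.univ φ) {T : Set (Fin n → ℝ)}
    {f g : MvPolynomial (Fin n) ℝ}
    (hT : ∀ x ∈ T, φ x ≤ 0)
    (hf : ∀ a ∈ f.support, 0 ≤ φ (toR a + toR a))
    (hg : ∀ b ∈ g.support, 0 < φ (toR b + toR b)) :
    projR (f * g) T = 0 :=
  projR_eq_zero_iff.mpr fun c hc hcT =>
    (pos_of_mem_support_mul hφ hf hg hc).not_ge (hT (toR c) hcT)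

end Exponents

/-- if `T ⊆ {π = 0}`, `2·Support(f) ⊆ {π ≥ 0}` and `2·Support(g) ⊆ {π > 0}`
for an affine function `π`, then `Proj(f·g, T) = 0`. -/
theorem statement0 {n : ℕ} (π : (Fin n → ℝ) →ᵃ[ℝ] ℝ) (T : Set (Fin n → ℝ))
    (f g : MvPolynomial (Fin n) ℝ)
    (hT : ∀ x ∈ T, π x = 0)
    (hf : ∀ a ∈ f.support, 0 ≤ π (toR a + toR a))
    (hg : ∀ a ∈ g.support, 0 < π (toR a + toR a)) :
    projR (f * g) T = 0 := by
  exact statement0_general (concaveOn_affineMap π convex_univ) (fun x hx => (hT x hx).le) hf hg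
end

section
/- Suppose p ∈ ℝ[x₁,…,xₙ] is a convex cover polynomial and F₁,…,F_u are pairwise disjoint faces of New(p) with Support(p) ⊆ F₁ ∪ … ∪ F_u. Let pᵢ = Proj(p, Fᵢ) for i = 1,…,u. Then p is SOS if and only if pᵢ is SOS for every i = 1,…,u. -/
open MvPolynomial
open scoped Classical

/-!
An affine functional that is nonnegative on `New(p)` and cuts out the face `F` is, on exponent
vectors, a weight up to a constant, so `Proj(p, F)` is the component of `p` of lowest weight.
If `p = Σ qᵢ²`, the lowest components of the `qᵢ²` are squares and cannot cancel over an ordered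
ring, so the lowest component of `p` is the sum of the squares of those of the `qᵢ`. Conversely,
disjoint sets covering `Support(p)` split `p` into the sum of its projections.
-/

section WeightedHomogeneous

variable {σ R M : Type*} [AddCommMonoid M] {w : σ → M}

lemma weightedHomogeneousComponent_add_mul [CommSemiring R] [PartialOrder M]
    [IsOrderedCancelAddMonoid M] {φ ψ : MvPolynomial σ R} {m n : M}
    (hφ : ∀ a ∈ φ.support, m ≤ Finsupp.weight w a)
    (hψ : ∀ b ∈ ψ.support, n ≤ Finsupp.weight w b) :
    weightedHomogeneousComponent w (m + n) (φ * ψ) =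
      weightedHomogeneousComponent w m φ * weightedHomogeneousComponent w n ψ := by
  ext d
  simp only [coeff_weightedHomogeneousComponent, coeff_mul, ite_zero_mul_ite_zero]
  have hterm : ∀ x ∈ Finset.HasAntidiagonal.antidiagonal d,
      (if Finsupp.weight w x.1 = m ∧ Finsupp.weight w x.2 = n
        then coeff x.1 φ * coeff x.2 ψ else 0) =
      if Finsupp.weight w d = m + n then coeff x.1 φ * coeff x.2 ψ else 0 := by
    intro x hx
    by_cases hx₁ : x.1 ∈ φ.support
    · by_cases hx₂ : x.2 ∈ ψ.support
      · refine if_congr ?_ rfl rfl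
        rw [← Finset.HasAntidiagonal.mem_antidiagonal.1 hx, map_add, eq_comm (b := m + n),
          add_eq_add_iff_eq_and_eq (hφ _ hx₁) (hψ _ hx₂), eq_comm, eq_comm (a := n)]
      · rw [notMem_support_iff.1 hx₂, mul_zero, ite_self, ite_self]
    · rw [notMem_support_iff.1 hx₁, zero_mul, ite_self, ite_self]
  rw [Finset.sum_congr rfl hterm, Finset.sum_ite_irrel, Finset.sum_const_zero]

lemma weightedHomogeneousComponent_sum_sq [CommSemiring R] [PartialOrder M]
    [IsOrderedCancelAddMonoid M] {ι : Type*} {s : Finset ι} {q : ι → MvPolynomial σ R} {m : M}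
    (hq : ∀ i ∈ s, ∀ b ∈ (q i).support, m ≤ Finsupp.weight w b) :
    weightedHomogeneousComponent w (m + m) (∑ i ∈ s, q i ^ 2) =
      ∑ i ∈ s, weightedHomogeneousComponent w m (q i) ^ 2 := by
  rw [map_sum]
  refine Finset.sum_congr rfl fun i hi => ?_
  rw [sq, sq, weightedHomogeneousComponent_add_mul (hq i hi) (hq i hi)]

variable [CommRing R] [LinearOrder R] [IsStrictOrderedRing R]

lemma eq_zero_of_sum_sq_eq_zero {ι : Type*} {s : Finset ι} {q : ι → MvPolynomial σ R}
    (h : ∑ i ∈ s, q i ^ 2 = 0) {i : ι} (hi : i ∈ s) : q i = 0 := by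
  refine MvPolynomial.funext fun x => ?_
  have heval : ∑ j ∈ s, eval x (q j) ^ 2 = 0 := by
    simpa only [map_sum, map_pow, map_zero] using congrArg (eval x) h
  have hsq := (Finset.sum_eq_zero_iff_of_nonneg fun j _ => sq_nonneg (eval x (q j))).1 heval i hi
  rw [map_zero]
  exact pow_eq_zero_iff two_ne_zero |>.1 hsq

lemma le_weight_of_mem_support_of_sum_sq [LinearOrder M] [IsOrderedCancelAddMonoid M]
    {ι : Type*} {s : Finset ι} {q : ι → MvPolynomial σ R} {m : M}
    (h : ∀ a ∈ (∑ i ∈ s, q i ^ 2).support, m + m ≤ Finsupp.weight w a)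
    {i : ι} (hi : i ∈ s) {b : σ →₀ ℕ} (hb : b ∈ (q i).support) : m ≤ Finsupp.weight w b := by
  have mem_biUnion {j c} (hj : j ∈ s) (hc : c ∈ (q j).support) :
      c ∈ s.biUnion fun j => (q j).support := Finset.mem_biUnion.2 ⟨j, hj, hc⟩
  obtain ⟨c, hc, hmin⟩ := Finset.exists_min_image (s.biUnion fun j => (q j).support)
    (Finsupp.weight w) ⟨b, mem_biUnion hi hb⟩
  obtain ⟨j, hj, hcj⟩ := Finset.mem_biUnion.1 hc
  refine le_trans ?_ (hmin b (mem_biUnion hi hb))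
  by_contra! hlt
  set k := Finsupp.weight w c with hk
  have hsum : ∑ l ∈ s, weightedHomogeneousComponent w k (q l) ^ 2 = 0 := by
    rw [← weightedHomogeneousComponent_sum_sq fun l hl d hd => hmin d (mem_biUnion hl hd)]
    exact weightedHomogeneousComponent_eq_zero' _ _ fun a ha =>
      ((add_lt_add hlt hlt).trans_le (h a ha)).ne'
  have hcoeff : coeff c (weightedHomogeneousComponent w k (q j)) = 0 := by
    rw [eq_zero_of_sum_sq_eq_zero hsum hj, coeff_zero]
  rw [coeff_weightedHomogeneousComponent, if_pos hk.symm] at hcoeff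
  exact mem_support_iff.1 hcj hcoeff

end WeightedHomogeneous

section SumOfSquares

variable {n : ℕ} {p : MvPolynomial (Fin n) ℝ}

lemma isSOS_iff_isSumSq : IsSOS p ↔ IsSumSq p := by
  constructor
  · rintro ⟨s, q, rfl⟩
    exact IsSumSq.sum_sq _ _
  · intro hp
    induction hp with
    | zero => exact ⟨0, Fin.elim0, by simp⟩
    | sq_add a _ ih =>
      obtain ⟨s, q, rfl⟩ := ih
      exact ⟨s + 1, Fin.cons a q, by simp [Fin.sum_univ_succ, sq]⟩

lemma IsSOS.sum {ι : Type*} {s : Finset ι} {f : ι → MvPolynomial (Fin n) ℝ}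
    (hf : ∀ i ∈ s, IsSOS (f i)) : IsSOS (∑ i ∈ s, f i) :=
  isSOS_iff_isSumSq.2 (IsSumSq.sum fun i hi => isSOS_iff_isSumSq.1 (hf i hi))

protected lemma IsSOS.weightedHomogeneousComponent {M : Type*} [AddCommMonoid M] [LinearOrder M]
    [IsOrderedCancelAddMonoid M] {w : Fin n → M} {m : M} (hp : IsSOS p)
    (hm : ∀ a ∈ p.support, m + m ≤ Finsupp.weight w a) :
    IsSOS (weightedHomogeneousComponent w (m + m) p) := by
  obtain ⟨s, q, rfl⟩ := hp
  exact ⟨s, fun i => weightedHomogeneousComponent w m (q i),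
    weightedHomogeneousComponent_sum_sq fun i hi _ hb =>
      le_weight_of_mem_support_of_sum_sq hm hi hb⟩

end SumOfSquares

section Face

variable {n : ℕ} {p : MvPolynomial (Fin n) ℝ}

lemma map_toR_eq_weight {E : Type*} [AddCommGroup E] [Module ℝ E]
    (f : (Fin n → ℝ) →ₗ[ℝ] E) (a : Fin n →₀ ℕ) :
    f (toR a) = Finsupp.weight (fun i => f (Pi.single i 1)) a := by
  rw [f.pi_apply_eq_sum_univ, Finsupp.weight_eq_sum]
  simp only [toR, Nat.cast_smul_eq_nsmul, ← Pi.single_apply, Pi.single_comm]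

lemma IsFace.exists_affineMap {N F : Set (Fin n → ℝ)} (hF : IsFace N F) :
    ∃ π : (Fin n → ℝ) →ᵃ[ℝ] ℝ, ∀ x ∈ N, 0 ≤ π x ∧ (x ∈ F ↔ π x = 0) := by
  obtain ⟨-, rfl | ⟨π, hzero, hpos⟩⟩ := hF
  · exact ⟨0, fun x hx => by simp [hx]⟩
  · refine ⟨π, fun x hx => ?_⟩
    by_cases hxF : x ∈ F
    · simp [hxF, hzero x hxF]
    · have hπx := hpos x ⟨hx, hxF⟩
      simp [hxF, hπx.le, hπx.ne']

lemma IsFace.exists_weight {N F : Set (Fin n → ℝ)} (hF : IsFace N F) :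
    ∃ (w : Fin n → ℝ) (m : ℝ), ∀ a : Fin n →₀ ℕ, toR a ∈ N →
      m ≤ Finsupp.weight w a ∧ (toR a ∈ F ↔ Finsupp.weight w a = m) := by
  obtain ⟨π, hπ⟩ := hF.exists_affineMap
  refine ⟨fun i => π.linear (Pi.single i 1), -π 0, fun a ha => ?_⟩
  have hsplit : π (toR a) = Finsupp.weight (fun i => π.linear (Pi.single i 1)) a + π 0 := by
    rw [← map_toR_eq_weight]
    exact congrFun π.decomp (toR a)
  obtain ⟨hnonneg, hmem⟩ := hπ (toR a) ha
  rw [hsplit] at hnonneg hmem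
  exact ⟨neg_le_iff_add_nonneg.2 hnonneg, hmem.trans eq_neg_iff_add_eq_zero.symm⟩

lemma toR_mem_newton {a : Fin n →₀ ℕ} (ha : a ∈ p.support) : toR a ∈ newton p :=
  subset_convexHull ℝ _ (Set.mem_image_of_mem toR ha)

lemma projR_eq_weightedHomogeneousComponent {M : Type*} [AddCommMonoid M] {w : Fin n → M} {m : M}
    {T : Set (Fin n → ℝ)} (hT : ∀ a ∈ p.support, toR a ∈ T ↔ Finsupp.weight w a = m) :
    projR p T = weightedHomogeneousComponent w m p := by
  rw [projR, weightedHomogeneousComponent_apply, Finset.sum_filter]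
  exact Finset.sum_congr rfl fun a ha => if_congr (hT a ha) rfl rfl

lemma IsSOS.projR_of_isFace {F : Set (Fin n → ℝ)} (hp : IsSOS p) (hF : IsFace (newton p) F) :
    IsSOS (projR p F) := by
  obtain ⟨w, m, hw⟩ := hF.exists_weight
  rw [projR_eq_weightedHomogeneousComponent fun a ha => (hw a (toR_mem_newton ha)).2,
    ← add_halves m]
  refine hp.weightedHomogeneousComponent fun a ha => ?_
  rw [add_halves]
  exact (hw a (toR_mem_newton ha)).1

lemma sum_projR_eq_self {ι : Type*} [Fintype ι] {T : ι → Set (Fin n → ℝ)}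
    (hdisj : Pairwise (Function.onFun Disjoint T)) (hcover : toR '' ↑p.support ⊆ ⋃ i, T i) :
    ∑ i, projR p (T i) = p := by
  simp only [projR]
  rw [Finset.sum_comm]
  conv_rhs => rw [← support_sum_monomial_coeff p]
  refine Finset.sum_congr rfl fun a ha => ?_
  obtain ⟨i, hi⟩ := Set.mem_iUnion.1 (hcover (Set.mem_image_of_mem toR ha))
  have hmem (j : ι) : toR a ∈ T j ↔ j = i :=
    ⟨fun hj => hdisj.eq (Set.not_disjoint_iff.2 ⟨_, hj, hi⟩), fun h => h ▸ hi⟩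
  simp only [hmem, Finset.sum_ite_eq', Finset.mem_univ, if_true]

end Face

/-- if pairwise disjoint faces `F₁,…,F_u` of `New(p)` cover `Support(p)`,
then `p` is SOS iff every `pᵢ = Proj(p,Fᵢ)` is SOS. -/
theorem statement4 {n : ℕ} (p : MvPolynomial (Fin n) ℝ) (u : ℕ)
    (F : Fin u → Set (Fin n → ℝ))
    (hface : ∀ i, IsFace (newton p) (F i))
    (hdisj : ∀ i j, i ≠ j → Disjoint (F i) (F j))
    (hcover : toR '' ↑p.support ⊆ ⋃ i, F i) :
    IsSOS p ↔ ∀ i, IsSOS (projR p (F i)) := by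
  refine ⟨fun hp i => hp.projR_of_isFace (hface i), fun hproj => ?_⟩
  rw [← sum_projR_eq_self (fun i j hij => hdisj i j hij) hcover]
  exact IsSOS.sum fun i _ => hproj i
end

section
/- Suppose G ⊆ ℕⁿ is a finite set satisfying SOSS(p,G) for a polynomial p ∈ ℝ[x₁,…,xₙ], and F is a face of the polytope conv(G+G) (where G+G is the Minkowski sum). Let T = {a ∈ V(p,G) : 2a ∈ F} and G₁ = (G+G) ∩ F. Then Relat(a) ⊆ T for every a ∈ G₁. -/
open MvPolynomial
open scoped Classical

open scoped Pointwise

/-!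
If `b + r` lies on a face `F`, it is the midpoint of `2b` and `2r`, so both of these lie on `F`
as well. Hence the recursion defining `Relat` never leaves `F`, and it can only stop at a point
with a unique decomposition, that is, at the double of an element of `V(p,G)`.
-/

theorem IsFace.isExtreme {n : ℕ} {N F : Set (Fin n → ℝ)} (hF : IsFace N F) :
    IsExtreme ℝ N F := by
  obtain ⟨hFN, rfl | ⟨π, hzero, hpos⟩⟩ := hF
  · exact .refl ℝ F
  refine ⟨hFN, ?_⟩
  rintro x hx y hy z hz ⟨s, t, hs, ht, hst, rfl⟩
  by_contra hxF
  have hπx : 0 < π x := hpos x ⟨hx, hxF⟩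
  have hπy : 0 ≤ π y := by
    by_cases hyF : y ∈ F
    · exact (hzero y hyF).ge
    · exact (hpos y ⟨hy, hyF⟩).le
  have hπz : s * π x + t * π y = 0 := (Convex.combo_affine_apply hst).symm.trans (hzero _ hz)
  exact (add_pos_of_pos_of_nonneg (mul_pos hs hπx) (mul_nonneg ht.le hπy)).ne' hπz

theorem toR_add_eq_midpoint {n : ℕ} (b r : Fin n →₀ ℕ) :
    toR (b + r) = midpoint ℝ (toR (b + b)) (toR (r + r)) := by
  ext i
  simp only [toR, midpoint_eq_smul_add, invOf_eq_inv, Finsupp.add_apply, Nat.cast_add,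
    Pi.add_apply, Pi.smul_apply, smul_eq_mul]
  ring

namespace RelatMem

variable {n : ℕ} {G : Finset (Fin n →₀ ℕ)} {a v : Fin n →₀ ℕ}

theorem mem_VSet (hv : RelatMem G a v) : v ∈ VSet G := by
  induction hv with
  | base _ _ hc hcc huniq =>
    subst hcc
    exact ⟨hc, fun b hb r hr hbr =>
      ⟨huniq b hb r hr hbr, huniq r hr b hb ((add_comm r b).trans hbr)⟩⟩
  | stepL _ _ _ _ _ _ _ _ _ ih => exact ih
  | stepR _ _ _ _ _ _ _ _ _ ih => exact ih

theorem add_self_mem {S : Set (Fin n →₀ ℕ)} (hv : RelatMem G a v)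
    (hS : ∀ b ∈ G, ∀ r ∈ G, b + r ∈ S → b + b ∈ S) (ha : a ∈ S) : v + v ∈ S := by
  induction hv with
  | base _ _ _ hcc _ =>
    subst hcc
    exact ha
  | stepL _ b r _ hb hr _ hbr _ ih =>
    subst hbr
    exact ih (hS b hb r hr ha)
  | stepR _ b r _ hb hr _ hbr _ ih =>
    subst hbr
    exact ih (hS r hr b hb (add_comm b r ▸ ha))

end RelatMem

theorem statement5_general {n : ℕ} {G : Finset (Fin n →₀ ℕ)} {A F : Set (Fin n → ℝ)}
    (hA : toR '' ((G : Set (Fin n →₀ ℕ)) + (G : Set (Fin n →₀ ℕ))) ⊆ A)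
    (hF : IsExtreme ℝ A F) {a : Fin n →₀ ℕ} (ha : toR a ∈ F) :
    Relat G a ⊆ {x | x ∈ VSet G ∧ toR (x + x) ∈ F} := by
  intro v hv
  have double_mem : ∀ b ∈ G, toR (b + b) ∈ A := fun b hb =>
    hA ⟨b + b, Set.add_mem_add hb hb, rfl⟩
  have hclosed : ∀ b ∈ G, ∀ r ∈ G, toR (b + r) ∈ F → toR (b + b) ∈ F := fun b hb r hr hbr =>
    hF.left_mem_of_mem_openSegment (double_mem b hb) (double_mem r hr) hbr
      (toR_add_eq_midpoint b r ▸ midpoint_mem_openSegment _ _)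
  exact ⟨hv.mem_VSet, hv.add_self_mem (S := toR ⁻¹' F) hclosed ha⟩

/-- if `F` is a face of `conv(G+G)` and `T = {a ∈ V(p,G) : 2a ∈ F}`,
then `Relat(a) ⊆ T` for every `a ∈ (G+G) ∩ F`. -/
theorem statement5 {n : ℕ} (p : MvPolynomial (Fin n) ℝ) (G : Finset (Fin n →₀ ℕ))
    (hG : SOSS p G) (F : Set (Fin n → ℝ))
    (hF : IsFace (convexHull ℝ (toR '' ((G : Set (Fin n →₀ ℕ)) + (G : Set (Fin n →₀ ℕ))))) F) :
    ∀ a ∈ ((G : Set (Fin n →₀ ℕ)) + (G : Set (Fin n →₀ ℕ))), toR a ∈ F →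
      Relat G a ⊆ {x | x ∈ VSet G ∧ toR (x + x) ∈ F} :=
  fun _ _ ha => statement5_general (subset_convexHull ℝ _) hF.isExtreme ha
end

section
/- Suppose p ∈ ℝ[x₁,…,xₙ] is SOS, say p = Σᵢ₌₁ˢ hᵢ² with Support(hᵢ) ⊆ G for a finite set G ⊆ ℕⁿ. Then for any T ⊆ V(p,G) and any b ∈ G+G: if Relat(b) ⊆ T, then b does not belong to the support of p − Σᵢ₌₁ˢ Proj(hᵢ, σ(T))². -/
open MvPolynomial
open scoped Classical

open scoped Pointwise

/-! Suppose `x + y = b` with `x, y ∈ G` and `Relat(b) ⊆ T`. The recursion for `Relat` gives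
`Relat(2x) ∪ Relat(2y) ⊆ Relat(b) ⊆ T`, so `x, y ∈ σ(T)`. Hence restricting each `hᵢ` to `σ(T)`
keeps every product of terms that contributes to the coefficient of `hᵢ²` at `b`. -/

section

variable {n : ℕ}

theorem coeff_projN (f : MvPolynomial (Fin n) ℝ) (S : Set (Fin n →₀ ℕ)) (x : Fin n →₀ ℕ) :
    (projN f S).coeff x = if x ∈ S then f.coeff x else 0 := by
  simp only [projN, coeff_sum, apply_ite (coeff x), coeff_monomial, coeff_zero]
  rw [← Finset.sum_filter, Finset.sum_ite_eq']
  by_cases hx : x ∈ f.support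
  · simp only [Finset.mem_filter, hx, true_and]
  · simp [notMem_support_iff.mp hx]

theorem coeff_projN_mul_projN {f g : MvPolynomial (Fin n) ℝ} {S S' : Set (Fin n →₀ ℕ)}
    {b : Fin n →₀ ℕ}
    (hS : ∀ x ∈ f.support, ∀ y ∈ g.support, x + y = b → x ∈ S ∧ y ∈ S') :
    (projN f S * projN g S').coeff b = (f * g).coeff b := by
  rw [coeff_mul, coeff_mul]
  refine Finset.sum_congr rfl fun ⟨x, y⟩ hxy ↦ ?_
  rw [Finset.HasAntidiagonal.mem_antidiagonal] at hxy
  simp only [coeff_projN]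
  by_cases hx : x ∈ f.support
  · by_cases hy : y ∈ g.support
    · obtain ⟨hxS, hyS⟩ := hS x hx y hy hxy
      rw [if_pos hxS, if_pos hyS]
    · simp [notMem_support_iff.mp hy]
  · simp [notMem_support_iff.mp hx]

variable {G : Finset (Fin n →₀ ℕ)} {T : Set (Fin n →₀ ℕ)} {x y : Fin n →₀ ℕ}

theorem relat_add_self_subset_relat_add (hx : x ∈ G) (hy : y ∈ G) :
    Relat G (x + x) ⊆ Relat G (x + y) := by
  obtain rfl | hne := eq_or_ne x y
  · rfl
  · exact fun v hv ↦ .stepL (x + y) x y v hx hy hne rfl hv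

theorem mem_sigmaSet_of_relat_add_subset (hx : x ∈ G) (hy : y ∈ G)
    (hT : Relat G (x + y) ⊆ T) : x ∈ sigmaSet G T :=
  ⟨hx, (relat_add_self_subset_relat_add hx hy).trans hT⟩

theorem coeff_projN_sigmaSet_mul {f g : MvPolynomial (Fin n) ℝ} {b : Fin n →₀ ℕ}
    (hf : f.support ⊆ G) (hg : g.support ⊆ G) (hT : Relat G b ⊆ T) :
    (projN f (sigmaSet G T) * projN g (sigmaSet G T)).coeff b = (f * g).coeff b := by
  refine coeff_projN_mul_projN fun x hx y hy hxy ↦ ?_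
  subst hxy
  exact ⟨mem_sigmaSet_of_relat_add_subset (hf hx) (hg hy) hT,
    mem_sigmaSet_of_relat_add_subset (hg hy) (hf hx) (add_comm x y ▸ hT)⟩

theorem statement6_general {ι : Type*} {s : Finset ι} {h : ι → MvPolynomial (Fin n) ℝ}
    {b : Fin n →₀ ℕ} (hsupp : ∀ i ∈ s, (h i).support ⊆ G) (hrel : Relat G b ⊆ T) :
    b ∉ (∑ i ∈ s, h i ^ 2 - ∑ i ∈ s, projN (h i) (sigmaSet G T) ^ 2).support := by
  rw [notMem_support_iff, coeff_sub, sub_eq_zero, coeff_sum, coeff_sum]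
  refine Finset.sum_congr rfl fun i hi ↦ ?_
  rw [sq, sq, coeff_projN_sigmaSet_mul (hsupp i hi) (hsupp i hi) hrel]

end

/-- if `p = Σ hᵢ²` with `Support(hᵢ) ⊆ G`, `T ⊆ V(p,G)`, `b ∈ G+G` and
`Relat(b) ⊆ T`, then `b ∉ Support(p − Σᵢ Proj(hᵢ, σ(T))²)`. -/
theorem statement6 {n : ℕ} (p : MvPolynomial (Fin n) ℝ) (G : Finset (Fin n →₀ ℕ))
    (s : ℕ) (h : Fin s → MvPolynomial (Fin n) ℝ)
    (hp : p = ∑ i, (h i) ^ 2) (hsupp : ∀ i, (h i).support ⊆ G)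
    (T : Set (Fin n →₀ ℕ)) (hT : T ⊆ VSet G)
    (b : Fin n →₀ ℕ) (hb : b ∈ ((G : Set (Fin n →₀ ℕ)) + (G : Set (Fin n →₀ ℕ))))
    (hrel : Relat G b ⊆ T) :
    b ∉ (p - ∑ i, (projN (h i) (sigmaSet G T)) ^ 2).support := by
  subst hp
  exact statement6_general (fun i _ ↦ hsupp i) hrel
end

section
/- Assume p = Σ_a c_a x^a ∈ ℝ[x₁,…,xₙ] is SOS, G ⊆ ℕⁿ is a finite set satisfying SOSS(p,G), and T ⊆ V(p,G). If Relat(a+b) ⊆ T for all a, b ∈ σ(T), then the polynomial p₁ = Σ_{a ∈ Support(p), Relat(a) ⊆ T} c_a x^a is SOS. -/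
open MvPolynomial
open scoped Classical

/-!
Take a decomposition `p = ∑ qᵢ²` with every `qᵢ` supported in `G`. For `b, r ∈ G` the recursion
gives `Relat(2b) ∪ Relat(2r) ⊆ Relat(b + r)`, so `Relat(b + r) ⊆ T` forces `b, r ∈ σ(T)`; the
hypothesis on `T` is the converse. Hence the products of terms of the `qᵢ` that contribute to `p₁`
are exactly those in which both exponents lie in `σ(T)`, and `p₁ = ∑ rᵢ²`, where `rᵢ` is the
restriction of `qᵢ` to the exponents in `σ(T)`.
-/

section ExponentProj

variable {σ R : Type*} [CommSemiring R]

/-- The projection of a polynomial onto the terms with exponent vector in `S`, for an arbitrary set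
`S` of exponent vectors. It is a linear map so that it commutes with finite sums. -/
noncomputable def exponentProj (S : Set (σ →₀ ℕ)) : MvPolynomial σ R →ₗ[R] MvPolynomial σ R :=
  (AddMonoidAlgebra.coeffLinearEquiv _).symm.toLinearMap ∘ₗ Submodule.subtype _ ∘ₗ
    Finsupp.restrictDom R R S ∘ₗ (AddMonoidAlgebra.coeffLinearEquiv _).toLinearMap

theorem coeff_exponentProj (S : Set (σ →₀ ℕ)) (f : MvPolynomial σ R) (m : σ →₀ ℕ) :
    coeff m (exponentProj S f) = if m ∈ S then coeff m f else 0 :=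
  Finsupp.filter_apply _ _ _

theorem exponentProj_monomial (S : Set (σ →₀ ℕ)) (a : σ →₀ ℕ) (c : R) :
    exponentProj S (monomial a c) = if a ∈ S then monomial a c else 0 := by
  ext m
  rw [coeff_exponentProj]
  by_cases ham : a = m
  · subst ham
    split_ifs <;> simp
  · split_ifs <;> simp [ham]

theorem exponentProj_mul {S U V : Set (σ →₀ ℕ)} {f g : MvPolynomial σ R}
    (h : ∀ a ∈ f.support, ∀ b ∈ g.support, a + b ∈ S ↔ a ∈ U ∧ b ∈ V) :
    exponentProj S (f * g) = exponentProj U f * exponentProj V g := by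
  ext m
  simp only [coeff_exponentProj, coeff_mul, ite_zero_mul_ite_zero, Finset.ite_sum_zero]
  refine Finset.sum_congr rfl fun x hx => ?_
  obtain ⟨a, b⟩ := x
  obtain rfl : a + b = m := Finset.HasAntidiagonal.mem_antidiagonal.mp hx
  by_cases hab : coeff a f * coeff b g = 0
  · simp only [hab, ite_self]
  · exact if_congr (h a (mem_support_iff.mpr (left_ne_zero_of_mul hab))
      b (mem_support_iff.mpr (right_ne_zero_of_mul hab))) rfl rfl

end ExponentProj

section Relat

variable {n : ℕ} {G : Finset (Fin n →₀ ℕ)} {T : Set (Fin n →₀ ℕ)} {b r : Fin n →₀ ℕ}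

theorem relat_add_self_left_subset_relat_add (hb : b ∈ G) (hr : r ∈ G) :
    Relat G (b + b) ⊆ Relat G (b + r) := by
  obtain rfl | hne := eq_or_ne b r
  · exact subset_rfl
  · exact fun v hv => .stepL _ b r v hb hr hne rfl hv

theorem relat_add_self_right_subset_relat_add (hb : b ∈ G) (hr : r ∈ G) :
    Relat G (r + r) ⊆ Relat G (b + r) :=
  add_comm r b ▸ relat_add_self_left_subset_relat_add hr hb

theorem relat_add_subset_iff
    (hclosed : ∀ a ∈ sigmaSet G T, ∀ b ∈ sigmaSet G T, Relat G (a + b) ⊆ T)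
    (hb : b ∈ G) (hr : r ∈ G) :
    Relat G (b + r) ⊆ T ↔ b ∈ sigmaSet G T ∧ r ∈ sigmaSet G T :=
  ⟨fun h => ⟨⟨hb, (relat_add_self_left_subset_relat_add hb hr).trans h⟩,
      ⟨hr, (relat_add_self_right_subset_relat_add hb hr).trans h⟩⟩,
    fun h => hclosed b h.1 r h.2⟩

end Relat

theorem projRelat_eq_exponentProj {n : ℕ} (p : MvPolynomial (Fin n) ℝ)
    (G : Finset (Fin n →₀ ℕ)) (T : Set (Fin n →₀ ℕ)) :
    projRelat p G T = exponentProj {a | Relat G a ⊆ T} p := by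
  conv_rhs => rw [p.as_sum, map_sum]
  simp only [exponentProj_monomial, Set.mem_ofPred_eq, projRelat]

theorem statement7_general {n : ℕ} (p : MvPolynomial (Fin n) ℝ) (G : Finset (Fin n →₀ ℕ))
    (hsos : IsSOS p) (hG : SOSS p G) (T : Set (Fin n →₀ ℕ))
    (hclosed : ∀ a ∈ sigmaSet G T, ∀ b ∈ sigmaSet G T, Relat G (a + b) ⊆ T) :
    IsSOS (projRelat p G T) := by
  obtain ⟨s, q, rfl, hq⟩ := hG hsos
  refine ⟨s, fun i => exponentProj (sigmaSet G T) (q i), ?_⟩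
  rw [projRelat_eq_exponentProj, map_sum]
  refine Finset.sum_congr rfl fun i _ => ?_
  rw [sq, sq, exponentProj_mul fun a ha b hb => relat_add_subset_iff hclosed (hq i ha) (hq i hb)]

/-- if `p` is SOS, `SOSS(p,G)` holds, `T ⊆ V(p,G)`, and
`Relat(a+b) ⊆ T` for all `a, b ∈ σ(T)`, then `p₁ = Σ_{a ∈ Support(p), Relat(a) ⊆ T} c_a x^a`
is SOS. -/
theorem statement7 {n : ℕ} (p : MvPolynomial (Fin n) ℝ) (G : Finset (Fin n →₀ ℕ))
    (hsos : IsSOS p) (hG : SOSS p G)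
    (T : Set (Fin n →₀ ℕ)) (hT : T ⊆ VSet G)
    (hclosed : ∀ a ∈ sigmaSet G T, ∀ b ∈ sigmaSet G T, Relat G (a + b) ⊆ T) :
    IsSOS (projRelat p G T) :=
  statement7_general p G hsos hG T hclosed
end

section
/- The Motzkin polynomial f = x₁⁴x₂² + x₁²x₂⁴ − 3x₁²x₂² + 1 ∈ ℝ[x₁,x₂] is not a sum of squares of polynomials. -/
open MvPolynomial
open scoped Classical

/-!
The Motzkin polynomial fails to be a sum of squares because of its Newton polytope, the triangle
with vertices `(4, 2)`, `(2, 4)`, `(0, 0)`. If `p = ∑ qᵢ²`, let `K` be the convex hull of the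
supports of all the `qᵢ`. A vertex `a` of `K` satisfies `2a = b + r` with `b, r ∈ K` only for
`b = r = a`, so the coefficient of `x^(2a)` in `p` is `∑ (coeff a qᵢ)² > 0`: squares cannot cancel
at the vertices, and therefore `2K ⊆ New(p)`. For the Motzkin polynomial this leaves only `(0, 0)`,
`(1, 1)`, `(2, 1)`, `(1, 2)` as exponents of the `qᵢ`. Among these `(2, 2)` decomposes only as
`(1, 1) + (1, 1)`, so its coefficient `-3` would again be a sum of squares.
-/

section SumOfSquares

variable {σ ι R : Type*} {s : Finset ι} {G : Finset (σ →₀ ℕ)} {a : σ →₀ ℕ}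

theorem coeff_add_self_sum_sq_of_uniqueAdd [CommSemiring R] {q : ι → MvPolynomial σ R}
    (hq : ∀ i ∈ s, (q i).support ⊆ G) (ha : UniqueAdd G G a a) :
    coeff (a + a) (∑ i ∈ s, q i ^ 2) = ∑ i ∈ s, coeff a (q i) ^ 2 := by
  rw [coeff_sum]
  refine Finset.sum_congr rfl fun i hi => ?_
  rw [sq, sq]
  exact AddMonoidAlgebra.coeff_mul_add_of_uniqueAdd (ha.mono (hq i hi) (hq i hi))

theorem add_self_mem_support_sum_sq_of_uniqueAdd [CommRing R] [LinearOrder R]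
    [IsStrictOrderedRing R] {q : ι → MvPolynomial σ R} (hq : ∀ i ∈ s, (q i).support ⊆ G)
    (ha : UniqueAdd G G a a) {j : ι} (hj : j ∈ s) (haj : a ∈ (q j).support) :
    a + a ∈ (∑ i ∈ s, q i ^ 2).support := by
  rw [mem_support_iff, coeff_add_self_sum_sq_of_uniqueAdd hq ha]
  have hpos : 0 < ∑ i ∈ s, coeff a (q i) ^ 2 :=
    Finset.sum_pos' (fun i _ => sq_nonneg (coeff a (q i)))
      ⟨j, hj, sq_pos_of_ne_zero (mem_support_iff.mp haj)⟩
  exact hpos.ne'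

end SumOfSquares

theorem convexHull_extremePoints_convexHull_of_finite {E : Type*} [AddCommGroup E] [Module ℝ E]
    [TopologicalSpace E] [T2Space E] [IsTopologicalAddGroup E] [ContinuousSMul ℝ E]
    [LocallyConvexSpace ℝ E] {s : Set E} (hs : s.Finite) :
    convexHull ℝ ((convexHull ℝ s).extremePoints ℝ) = convexHull ℝ s := by
  have hclosed : IsClosed (convexHull ℝ ((convexHull ℝ s).extremePoints ℝ)) :=
    (hs.subset extremePoints_convexHull_subset).isClosed_convexHull ℝ
  rw [← hclosed.closure_eq,
    closure_convexHull_extremePoints (hs.isCompact_convexHull ℝ) (convex_convexHull ℝ s)]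

section NewtonPolytope

variable {n : ℕ}

theorem toR_injective : Function.Injective (toR (n := n)) := fun _ _ h =>
  Finsupp.ext fun i => Nat.cast_injective (congrFun h i)

theorem uniqueAdd_of_toR_mem_extremePoints {G : Finset (Fin n →₀ ℕ)} {a : Fin n →₀ ℕ}
    (ha : toR a ∈ (convexHull ℝ (toR '' G)).extremePoints ℝ) : UniqueAdd G G a a := by
  intro b r hb hr hbr
  have hull {c} (hc : c ∈ G) : toR c ∈ convexHull ℝ (toR '' (G : Set (Fin n →₀ ℕ))) :=
    subset_convexHull ℝ _ (Set.mem_image_of_mem toR hc)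
  have hsum : toR b + toR r = toR a + toR a := by rw [← toR_add, hbr, toR_add]
  have hmid : toR a ∈ openSegment ℝ (toR b) (toR r) := by
    refine ⟨1 / 2, 1 / 2, by norm_num, by norm_num, by norm_num, ?_⟩
    rw [← smul_add, hsum, ← two_smul ℝ (toR a), smul_smul]
    norm_num
  obtain ⟨hba, hra⟩ := (mem_extremePoints.mp ha).2 _ (hull hb) _ (hull hr) hmid
  exact ⟨toR_injective hba, toR_injective hra⟩

theorem toR_add_self_mem_newton_sum_sq {ι : Type*} {s : Finset ι}
    {q : ι → MvPolynomial (Fin n) ℝ} {j : ι} (hj : j ∈ s) {a : Fin n →₀ ℕ}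
    (ha : a ∈ (q j).support) : toR (a + a) ∈ newton (∑ i ∈ s, q i ^ 2) := by
  set N := newton (∑ i ∈ s, q i ^ 2)
  set G := s.biUnion fun i => (q i).support
  have hq : ∀ i ∈ s, (q i).support ⊆ G := fun i hi =>
    Finset.subset_biUnion_of_mem (fun i => (q i).support) hi
  have hvertex : (convexHull ℝ (toR '' G)).extremePoints ℝ ⊆ {x | (2 : ℝ) • x ∈ N} := by
    intro x hx
    obtain ⟨v, hv, rfl⟩ := extremePoints_convexHull_subset hx
    obtain ⟨i, hi, hvi⟩ := Finset.mem_biUnion.mp hv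
    have hmem := add_self_mem_support_sum_sq_of_uniqueAdd hq
      (uniqueAdd_of_toR_mem_extremePoints hx) hi hvi
    rw [Set.mem_ofPred_eq, two_smul, ← toR_add]
    exact subset_convexHull ℝ _ (Set.mem_image_of_mem toR hmem)
  have hhull : convexHull ℝ (toR '' G) ⊆ {x | (2 : ℝ) • x ∈ N} := by
    rw [← convexHull_extremePoints_convexHull_of_finite (G.finite_toSet.image toR)]
    exact convexHull_min hvertex ((convex_convexHull ℝ _).smul_preimage 2)
  rw [toR_add, ← two_smul ℝ]
  exact hhull (subset_convexHull ℝ _ (Set.mem_image_of_mem toR (hq j hj ha)))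

theorem IsSOS.coeff_add_self_nonneg {p : MvPolynomial (Fin n) ℝ} (hp : IsSOS p)
    {c : Fin n →₀ ℕ}
    (hc : ∀ a b, toR (a + a) ∈ newton p → toR (b + b) ∈ newton p → a + b = c + c →
      a = c ∧ b = c) :
    0 ≤ coeff (c + c) p := by
  obtain ⟨s, q, rfl⟩ := hp
  set G := Finset.univ.biUnion fun i => (q i).support
  have hG {a} (ha : a ∈ G) : toR (a + a) ∈ newton (∑ i, q i ^ 2) := by
    obtain ⟨i, hi, hai⟩ := Finset.mem_biUnion.mp ha
    exact toR_add_self_mem_newton_sum_sq hi hai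
  have hunique : UniqueAdd G G c c := fun a b ha hb => hc a b (hG ha) (hG hb)
  rw [coeff_add_self_sum_sq_of_uniqueAdd
    (fun i hi => Finset.subset_biUnion_of_mem (fun i => (q i).support) hi) hunique]
  exact Finset.sum_nonneg fun i _ => sq_nonneg _

end NewtonPolytope

/-- The Motzkin polynomial `x₁⁴x₂² + x₁²x₂⁴ - 3x₁²x₂² + 1`, with `x₁ = X 0` and `x₂ = X 1`. -/
noncomputable def motzkin : MvPolynomial (Fin 2) ℝ :=
  X 0 ^ 4 * X 1 ^ 2 + X 0 ^ 2 * X 1 ^ 4 - 3 * X 0 ^ 2 * X 1 ^ 2 + 1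

theorem coeff_motzkin (a : Fin 2 →₀ ℕ) :
    coeff a motzkin = (if a 0 = 4 ∧ a 1 = 2 then 1 else 0) + (if a 0 = 2 ∧ a 1 = 4 then 1 else 0)
      - (if a 0 = 2 ∧ a 1 = 2 then 3 else 0) + (if a 0 = 0 ∧ a 1 = 0 then 1 else 0) := by
  have hXX (k l : ℕ) : coeff a (X 0 ^ k * X 1 ^ l : MvPolynomial (Fin 2) ℝ) =
      if a 0 = k ∧ a 1 = l then 1 else 0 := by
    rw [X_pow_eq_monomial, X_pow_eq_monomial, monomial_mul, coeff_monomial, mul_one]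
    simp [Finsupp.ext_iff, Fin.forall_fin_two, eq_comm]
  have hmotzkin : motzkin = X 0 ^ 4 * X 1 ^ 2 + X 0 ^ 2 * X 1 ^ 4 - C 3 * (X 0 ^ 2 * X 1 ^ 2)
      + X 0 ^ 0 * X 1 ^ 0 := by
    rw [motzkin, map_ofNat]
    ring
  simp only [hmotzkin, coeff_add, coeff_sub, coeff_C_mul, hXX, mul_ite, mul_one, mul_zero]

theorem newton_motzkin_subset :
    newton motzkin ⊆ {x | x 0 ≤ 2 * x 1 ∧ x 1 ≤ 2 * x 0 ∧ x 0 + x 1 ≤ 6} := by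
  refine convexHull_min ?_ ?_
  · rintro _ ⟨a, ha, rfl⟩
    have hsupp : a 0 = 4 ∧ a 1 = 2 ∨ a 0 = 2 ∧ a 1 = 4 ∨ a 0 = 2 ∧ a 1 = 2 ∨
        a 0 = 0 ∧ a 1 = 0 := by
      by_contra! h
      refine mem_support_iff.mp ha ?_
      rw [coeff_motzkin]
      grind
    rcases hsupp with ⟨h₀, h₁⟩ | ⟨h₀, h₁⟩ | ⟨h₀, h₁⟩ | ⟨h₀, h₁⟩ <;> norm_num [toR, h₀, h₁]
  · rintro x ⟨hx₁, hx₂, hx₃⟩ y ⟨hy₁, hy₂, hy₃⟩ t u ht hu htu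
    simp only [Set.mem_ofPred_eq, Pi.add_apply, Pi.smul_apply, smul_eq_mul]
    refine ⟨?_, ?_, ?_⟩ <;> nlinarith

theorem le_of_toR_add_self_mem_newton_motzkin {a : Fin 2 →₀ ℕ}
    (ha : toR (a + a) ∈ newton motzkin) : a 0 ≤ 2 * a 1 ∧ a 1 ≤ 2 * a 0 ∧ a 0 + a 1 ≤ 3 := by
  obtain ⟨h₁, h₂, h₃⟩ := newton_motzkin_subset ha
  simp only [toR, Finsupp.add_apply] at h₁ h₂ h₃
  norm_cast at h₁ h₂ h₃
  lia

theorem eq_of_add_eq_add_self_of_mem_newton_motzkin {a b c : Fin 2 →₀ ℕ} (hc : ∀ i, c i = 1)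
    (ha : toR (a + a) ∈ newton motzkin) (hb : toR (b + b) ∈ newton motzkin)
    (hab : a + b = c + c) : a = c ∧ b = c := by
  have ha' := le_of_toR_add_self_mem_newton_motzkin ha
  have hb' := le_of_toR_add_self_mem_newton_motzkin hb
  have h₀ := DFunLike.congr_fun hab 0
  have h₁ := DFunLike.congr_fun hab 1
  simp only [Finsupp.add_apply, hc] at h₀ h₁
  simp only [Finsupp.ext_iff, Fin.forall_fin_two, hc]
  lia

/-- the Motzkin polynomial is not a sum of squares. -/
theorem statement15 :
    ¬ IsSOS ((X 0) ^ 4 * (X 1) ^ 2 + (X 0) ^ 2 * (X 1) ^ 4 - 3 * (X 0) ^ 2 * (X 1) ^ 2 + 1 :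
      MvPolynomial (Fin 2) ℝ) := by
  intro (hsos : IsSOS motzkin)
  obtain ⟨c, hc⟩ : ∃ c : Fin 2 →₀ ℕ, ∀ i, c i = 1 :=
    ⟨Finsupp.equivFunOnFinite.symm 1, fun _ => rfl⟩
  have hnonneg : 0 ≤ coeff (c + c) motzkin := hsos.coeff_add_self_nonneg fun _ _ =>
    eq_of_add_eq_add_self_of_mem_newton_motzkin hc
  have hcoeff : coeff (c + c) motzkin = -3 := by simp [coeff_motzkin, hc]
  linarith
end

section
/- The Choi–Lam polynomial q = 1 + x²y² + y²z² + z²x² − 4xyz ∈ ℝ[x,y,z] is not a sum of squares of polynomials. -/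
open MvPolynomial
open scoped Classical

/-!
If `a` is an extreme point of the convex hull of the supports of the `qᵢ`, then `a + a` is the
only way to write `2a` as a sum of two exponents, so the coefficient of `∑ qᵢ²` at `2a` is a sum
of squares of real numbers, not all zero. Hence `2 • New(qᵢ) ⊆ New(∑ qᵢ²)`.
For the Choi–Lam polynomial `p`, `New(p) / 2` is the tetrahedron with vertices `0`, `(1, 1, 0)`,
`(0, 1, 1)`, `(1, 0, 1)`, whose lattice points all have even coordinate sum. A product of two
monomials of the `qᵢ` therefore has even degree and is never `xyz`, although the coefficient of
`xyz` in `p` is `-4`.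
-/

section Newton

variable {n : ℕ}

theorem isClosed_newton (p : MvPolynomial (Fin n) ℝ) : IsClosed (newton p) :=
  (p.support.finite_toSet.image toR).isClosed_convexHull ℝ

theorem dotProduct_le_of_mem_newton {p : MvPolynomial (Fin n) ℝ} {w : Fin n → ℝ} {c : ℝ}
    (hp : ∀ a ∈ p.support, w ⬝ᵥ toR a ≤ c) {x : Fin n → ℝ} (hx : x ∈ newton p) :
    w ⬝ᵥ x ≤ c :=
  convexHull_min (t := {y | w ⬝ᵥ y ≤ c}) (Set.image_subset_iff.mpr hp)
    (convex_halfSpace_le (dotProductBilin ℝ ℝ w).isLinear c) hx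

theorem mem_VSet_of_mem_extremePoints {G : Finset (Fin n →₀ ℕ)} {a : Fin n →₀ ℕ}
    (ha : toR a ∈ (convexHull ℝ (toR '' (G : Set (Fin n →₀ ℕ)))).extremePoints ℝ) :
    a ∈ VSet G := by
  have mem_hull {b} (hb : b ∈ G) : toR b ∈ convexHull ℝ (toR '' (G : Set (Fin n →₀ ℕ))) :=
    subset_convexHull ℝ _ ⟨b, hb, rfl⟩
  refine ⟨toR_injective.mem_set_image.mp (extremePoints_convexHull_subset ha),
    fun b hb r hr hbr => ?_⟩
  have hmid : toR a ∈ openSegment ℝ (toR b) (toR r) := by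
    refine ⟨1 / 2, 1 / 2, by norm_num, by norm_num, by norm_num, ?_⟩
    rw [← smul_add, ← toR_add, hbr, toR_add, ← two_smul ℝ, smul_smul]
    norm_num
  obtain ⟨hba, hra⟩ :=
    (mem_extremePoints.mp ha).2 _ (mem_hull hb) _ (mem_hull hr) hmid
  exact ⟨toR_injective hba, toR_injective hra⟩

theorem coeff_add_self_sq_of_mem_VSet {R : Type*} [CommSemiring R] {G : Finset (Fin n →₀ ℕ)}
    {a : Fin n →₀ ℕ} (ha : a ∈ VSet G) {q : MvPolynomial (Fin n) R} (hq : q.support ⊆ G) :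
    (q ^ 2).coeff (a + a) = q.coeff a ^ 2 := by
  have huniq : UniqueAdd q.support q.support a a :=
    fun b r hb hr hbr => ha.2 b (hq hb) r (hq hr) hbr
  rw [sq, sq]
  exact AddMonoidAlgebra.coeff_mul_add_of_uniqueAdd huniq

theorem add_self_mem_support_sum_sq {ι R : Type*} [CommRing R] [LinearOrder R]
    [IsStrictOrderedRing R] {s : Finset ι} {q : ι → MvPolynomial (Fin n) R} {a : Fin n →₀ ℕ}
    (ha : a ∈ VSet (s.biUnion fun i => (q i).support)) :
    a + a ∈ (∑ i ∈ s, q i ^ 2).support := by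
  obtain ⟨j, hj, haj⟩ := Finset.mem_biUnion.mp ha.1
  rw [mem_support_iff, coeff_sum, Finset.sum_congr rfl fun i hi =>
    coeff_add_self_sq_of_mem_VSet ha (Finset.subset_biUnion_of_mem (fun i => (q i).support) hi)]
  exact (Finset.sum_pos' (fun i _ => sq_nonneg ((q i).coeff a))
    ⟨j, hj, sq_pos_of_ne_zero (mem_support_iff.mp haj)⟩).ne'

theorem two_smul_mem_newton_sum_sq {ι : Type*} {s : Finset ι}
    {q : ι → MvPolynomial (Fin n) ℝ} {i : ι} (hi : i ∈ s) {x : Fin n → ℝ} (hx : x ∈ newton (q i)) :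
    (2 : ℝ) • x ∈ newton (∑ i ∈ s, q i ^ 2) := by
  set G := s.biUnion fun i => (q i).support
  set N := newton (∑ i ∈ s, q i ^ 2)
  set H := convexHull ℝ (toR '' (G : Set (Fin n →₀ ℕ)))
  have hH : IsCompact H := (G.finite_toSet.image toR).isCompact_convexHull ℝ
  have hextreme : H.extremePoints ℝ ⊆ ((2 : ℝ) • ·) ⁻¹' N := by
    intro y hy
    obtain ⟨a, -, rfl⟩ := extremePoints_convexHull_subset hy
    have ha := add_self_mem_support_sum_sq (mem_VSet_of_mem_extremePoints hy)
    rw [Set.mem_preimage, two_smul, ← toR_add]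
    exact subset_convexHull ℝ _ ⟨a + a, ha, rfl⟩
  have hconvex : Convex ℝ (((2 : ℝ) • ·) ⁻¹' N) :=
    (convex_convexHull ℝ _).smul_preimage 2
  have hclosed : IsClosed (((2 : ℝ) • ·) ⁻¹' N) :=
    (isClosed_newton _).preimage (continuous_const_smul 2)
  have hxH : x ∈ H := convexHull_mono
    (Set.image_mono (Finset.subset_biUnion_of_mem (fun i => (q i).support) hi)) hx
  rw [← closure_convexHull_extremePoints hH (convex_convexHull ℝ _)] at hxH
  exact closure_minimal (convexHull_min hextreme hconvex) hclosed hxH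

theorem IsSOS.coeff_eq_zero_of_forall_add_ne {p : MvPolynomial (Fin n) ℝ} (hp : IsSOS p)
    {a : Fin n →₀ ℕ}
    (ha : ∀ b r, (2 : ℝ) • toR b ∈ newton p → (2 : ℝ) • toR r ∈ newton p → b + r ≠ a) :
    p.coeff a = 0 := by
  obtain ⟨s, q, rfl⟩ := hp
  have hhalf {i b} (hb : (q i).coeff b ≠ 0) :
      (2 : ℝ) • toR b ∈ newton (∑ i, q i ^ 2) :=
    two_smul_mem_newton_sum_sq (Finset.mem_univ i)
      (subset_convexHull ℝ _ ⟨b, mem_support_iff.mpr hb, rfl⟩)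
  rw [coeff_sum]
  refine Finset.sum_eq_zero fun i _ => ?_
  rw [sq, coeff_mul]
  refine Finset.sum_eq_zero fun ⟨b, r⟩ hbr => ?_
  by_contra hne
  exact ha b r (hhalf (left_ne_zero_of_mul hne)) (hhalf (right_ne_zero_of_mul hne))
    (Finset.HasAntidiagonal.mem_antidiagonal.mp hbr)

end Newton

/-- The Choi–Lam polynomial, named in order to speak of its support and Newton polytope; spelled
as in the main theorem, so that the two agree by unfolding. -/
noncomputable def choiLam : MvPolynomial (Fin 3) ℝ :=
  1 + (X 0) ^ 2 * (X 1) ^ 2 + (X 1) ^ 2 * (X 2) ^ 2 + (X 2) ^ 2 * (X 0) ^ 2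
    - 4 * X 0 * X 1 * X 2

open Finsupp (single)

theorem choiLam_eq_sum_monomial :
    choiLam = monomial 0 1 + monomial (single 0 2 + single 1 2) 1
      + monomial (single 1 2 + single 2 2) 1 + monomial (single 2 2 + single 0 2) 1
      - monomial (single 0 1 + single 1 1 + single 2 1) 4 := by
  have four : (4 : MvPolynomial (Fin 3) ℝ) = monomial 0 4 := (map_ofNat C 4).symm
  simp only [choiLam, four, X, monomial_pow, monomial_mul, one_pow, mul_one, zero_add,
    Finsupp.smul_single, smul_eq_mul]
  rfl

theorem support_choiLam_subset :
    choiLam.support ⊆ {0, single 0 2 + single 1 2, single 1 2 + single 2 2,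
      single 2 2 + single 0 2, single 0 1 + single 1 1 + single 2 1} := by
  intro a ha
  contrapose! ha
  simp only [Finset.mem_insert, Finset.mem_singleton, not_or] at ha
  simp [choiLam_eq_sum_monomial, coeff_one, coeff_monomial, Ne.symm ha.1, Ne.symm ha.2.1,
    Ne.symm ha.2.2.1, Ne.symm ha.2.2.2.1, Ne.symm ha.2.2.2.2]

theorem coeff_choiLam_xyz : choiLam.coeff (single 0 1 + single 1 1 + single 2 1) = -4 := by
  simp [choiLam_eq_sum_monomial, coeff_one, coeff_monomial, Finsupp.ext_iff, Fin.forall_fin_succ]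

theorem le_of_mem_newton_choiLam {u v w c : ℝ} (hc : 0 ≤ c) (huv : 2 * u + 2 * v ≤ c)
    (hvw : 2 * v + 2 * w ≤ c) (hwu : 2 * w + 2 * u ≤ c) {x : Fin 3 → ℝ}
    (hx : x ∈ newton choiLam) : u * x 0 + v * x 1 + w * x 2 ≤ c := by
  have hdot (y : Fin 3 → ℝ) : ![u, v, w] ⬝ᵥ y = u * y 0 + v * y 1 + w * y 2 :=
    Matrix.vec3_dotProduct _ _
  have hsupport : ∀ a ∈ choiLam.support, ![u, v, w] ⬝ᵥ toR a ≤ c := by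
    intro a ha
    have hmem := support_choiLam_subset ha
    simp only [Finset.mem_insert, Finset.mem_singleton] at hmem
    rw [hdot]
    rcases hmem with rfl | rfl | rfl | rfl | rfl <;>
      simp only [toR, Finsupp.coe_add, Finsupp.coe_zero, Pi.add_apply, Pi.zero_apply,
        Finsupp.single_apply, Fin.reduceEq, if_true, if_false] <;>
      push_cast <;> linarith
  exact (hdot x).symm.trans_le (dotProduct_le_of_mem_newton hsupport hx)

theorem newton_choiLam_subset :
    newton choiLam ⊆ {x | x 0 + x 1 + x 2 ≤ 4 ∧ x 0 ≤ x 1 + x 2 ∧ x 1 ≤ x 2 + x 0 ∧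
      x 2 ≤ x 0 + x 1} := by
  intro x hx
  have hsum : 1 * x 0 + 1 * x 1 + 1 * x 2 ≤ 4 := by
    apply le_of_mem_newton_choiLam _ _ _ _ hx <;> norm_num
  have h0 : 1 * x 0 + -1 * x 1 + -1 * x 2 ≤ 0 := by
    apply le_of_mem_newton_choiLam _ _ _ _ hx <;> norm_num
  have h1 : -1 * x 0 + 1 * x 1 + -1 * x 2 ≤ 0 := by
    apply le_of_mem_newton_choiLam _ _ _ _ hx <;> norm_num
  have h2 : -1 * x 0 + -1 * x 1 + 1 * x 2 ≤ 0 := by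
    apply le_of_mem_newton_choiLam _ _ _ _ hx <;> norm_num
  refine ⟨?_, ?_, ?_, ?_⟩ <;> linarith

theorem even_degree_of_two_smul_mem_newton_choiLam {a : Fin 3 →₀ ℕ}
    (ha : (2 : ℝ) • toR a ∈ newton choiLam) : Even a.degree := by
  obtain ⟨hsum, h0, h1, h2⟩ := newton_choiLam_subset ha
  simp only [Pi.smul_apply, toR, smul_eq_mul] at hsum h0 h1 h2
  norm_cast at hsum h0 h1 h2
  rw [Finsupp.degree_eq_sum, Fin.sum_univ_three, Nat.even_iff]
  omega

/-- the Choi–Lam polynomial is not a sum of squares. -/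
theorem statement16 :
    ¬ IsSOS (1 + (X 0) ^ 2 * (X 1) ^ 2 + (X 1) ^ 2 * (X 2) ^ 2 + (X 2) ^ 2 * (X 0) ^ 2
        - 4 * X 0 * X 1 * X 2 : MvPolynomial (Fin 3) ℝ) := by
  intro (hsos : IsSOS choiLam)
  have hxyz : choiLam.coeff (single 0 1 + single 1 1 + single 2 1) = 0 := by
    refine hsos.coeff_eq_zero_of_forall_add_ne fun b r hb hr hbr => ?_
    have heven : Even (b + r).degree := by
      rw [map_add]
      exact (even_degree_of_two_smul_mem_newton_choiLam hb).add
        (even_degree_of_two_smul_mem_newton_choiLam hr)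
    have hdegree : (b + r).degree = 3 := by
      simp [hbr]
    rw [hdegree] at heven
    exact absurd heven (by decide)
  rw [coeff_choiLam_xyz] at hxyz
  norm_num at hxyz
end
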